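/- Let A ⊆ L be a differential subfield and let x, y, z be finite tuples from L such that A⟨x⟩⟨y⟩ = A⟨x⟩⟨z⟩ (y and z generate the same differential field over A⟨x⟩, as happens when z = y·x and y = z·x⁻¹ in a matrix group). Suppose y is independent from x over A in the sense that some Kolchin polynomial of y over A⟨x⟩ is also a Kolchin polynomial of y over A. Then, for Kolchin polynomials p of y over A and q of z over A, one has deg p ≤ deg q, and if deg p = deg q then leadingCoeff(p) ≤ leadingCoeff(q); i.e., τ(y/A) ≤ τ(z/A), and in case of equality α(y/A) ≤ α(z/A). -/

import Mathlib

open Polynomial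

/-- Iterated application of the derivations `δ` according to the multi-exponent `e`:
`x ↦ δ₁^[e 1] (δ₂^[e 2] (⋯ (δ_m^[e m] x)))`. -/
def thetaApply {L : Type*} {m : ℕ} (δ : Fin m → L → L) (e : Fin m → ℕ) : L → L :=
  (List.ofFn (fun i => (δ i)^[e i])).foldr (· ∘ ·) id

/-- A subfield of `L` is a differential subfield if it is closed under each derivation. -/
def IsDiffSubfield {L : Type*} [Field L] {m : ℕ} (δ : Fin m → L → L) (K : Subfield L) : Prop :=
  ∀ i : Fin m, ∀ x ∈ K, δ i x ∈ K

/-- The transcendence degree (as a natural number) of an intermediate field over the base. -/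
noncomputable def trdegNat {L : Type*} [Field L] (K : Subfield L) (E : IntermediateField K L) : ℕ :=
  (⨆ s : {s : Set E // AlgebraicIndependent K ((↑) : s → E)}, Cardinal.mk s.1).toNat

/-- `T_{η/K}(s)`: the transcendence degree over `K` of the subfield of `L` generated by `K`
together with all `δ₁^(e 1) ⋯ δ_m^(e m) (η j)` with `e 1 + ⋯ + e m ≤ s`. -/
noncomputable def diffTrdeg {L : Type*} [Field L] {m n : ℕ} (δ : Fin m → L → L) (K : Subfield L)
    (η : Fin n → L) (s : ℕ) : ℕ :=
  trdegNat K (IntermediateField.adjoin K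
    {x : L | ∃ e : Fin m → ℕ, (∑ i, e i) ≤ s ∧ ∃ j : Fin n, x = thetaApply δ e (η j)})

/-- `p` is a Kolchin polynomial of `η` over `K` if `p(s) = T_{η/K}(s)` for all large `s`. -/
def IsKolchinPoly {L : Type*} [Field L] {m n : ℕ} (δ : Fin m → L → L) (K : Subfield L)
    (η : Fin n → L) (p : ℚ[X]) : Prop :=
  ∃ s₀ : ℕ, ∀ s : ℕ, s₀ ≤ s → p.eval (s : ℚ) = (diffTrdeg δ K η s : ℚ)

/-- `K⟨S⟩`: the smallest differential subfield of `L` containing `K` and `S`. -/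
def diffAdjoin {L : Type*} [Field L] {m : ℕ} (δ : Fin m → L → L) (K : Subfield L)
    (S : Set L) : Subfield L :=
  sInf {F : Subfield L | IsDiffSubfield δ F ∧ K ≤ F ∧ S ⊆ F}

/-!
Put `B = A⟨x⟩`. Each coordinate of `y` lies in `B⟨z⟩`, hence is a rational function over `B` of
derivatives of `z` of order at most some fixed `r`, and differentiating `s` times raises the order
by at most `s`. Together with the independence of `y` from `x`, this gives for large `s`
`T_{y/A}(s) = T_{y/B}(s) ≤ T_{z/B}(s + r) ≤ T_{z/A}(s + r)`,
and the shift by `r` changes neither the degree nor the leading coefficient of a polynomial.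
-/

section Trdeg

open IntermediateField

variable {F K E : Type*} [Field F] [Field K] [Field E] [Algebra F K] [Algebra F E] [Algebra K E]

theorem adjoin_preimage_val_eq_top (S : Set E) :
    adjoin K ((↑) ⁻¹' S : Set (adjoin K S)) = ⊤ := by
  have hS : S ⊆ Set.range ((↑) : adjoin K S → E) :=
    fun a ha => ⟨⟨a, subset_adjoin K S ha⟩, rfl⟩
  apply lift_injective
  rw [lift_adjoin, lift_top, Set.image_preimage_eq_of_subset hS]

theorem exists_subset_isTranscendenceBasis_adjoin (S : Set E) :
    ∃ t : Set (adjoin K S), t ⊆ (↑) ⁻¹' S ∧ IsTranscendenceBasis K ((↑) : t → adjoin K S) := by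
  have : Algebra.IsAlgebraic (Algebra.adjoin K ((↑) ⁻¹' S : Set (adjoin K S))) (adjoin K S) := by
    rw [← isAlgebraic_adjoin_iff_top, adjoin_preimage_val_eq_top, Algebra.isAlgebraic_def]
    exact fun a => isAlgebraic_algebraMap (⟨a, mem_top⟩ : (⊤ : IntermediateField K (adjoin K S)))
  have : FaithfulSMul K (adjoin K S) :=
    (faithfulSMul_iff_algebraMap_injective _ _).mpr (algebraMap K _).injective
  exact exists_isTranscendenceBasis_subset _

theorem trdeg_adjoin_le_of_isScalarTower [IsScalarTower F K E] (S : Set E) :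
    Algebra.trdeg K (adjoin K S) ≤ Algebra.trdeg F (adjoin F S) := by
  obtain ⟨t, htS, ht⟩ := exists_subset_isTranscendenceBasis_adjoin (K := K) S
  have indep_K : AlgebraicIndependent K fun a : t => (a : E) :=
    ht.1.map' (f := (adjoin K S).val) Subtype.val_injective
  have indep_F : AlgebraicIndependent F
      fun a : t => (⟨a, subset_adjoin F S (htS a.2)⟩ : adjoin F S) :=
    .of_comp (adjoin F S).val (indep_K.restrictScalars (algebraMap F K).injective)
  exact ht.cardinalMk_eq_trdeg.symm.trans_le indep_F.cardinalMk_le_trdeg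

theorem trdeg_adjoin_lt_aleph0 {S : Set E} (hS : S.Finite) :
    Algebra.trdeg K (adjoin K S) < Cardinal.aleph0 := by
  have : Algebra.EssFiniteType K (adjoin K S) := essFiniteType_iff.mpr (fg_adjoin_of_finite hS)
  exact trdeg_lt_aleph0 K _

end Trdeg

section IteratedDerivatives

variable {L ι : Type*} {m : ℕ}

theorem thetaApply_succ (δ : Fin (m + 1) → L → L) (e : Fin (m + 1) → ℕ) (u : L) :
    thetaApply δ e u =
      (δ 0)^[e 0] (thetaApply (fun i => δ i.succ) (fun i => e i.succ) u) := by
  simp only [thetaApply, List.ofFn_succ, List.foldr_cons, Function.comp_apply]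

theorem thetaApply_zero (δ : Fin m → L → L) (u : L) : thetaApply δ 0 u = u := by
  induction m with
  | zero => rfl
  | succ m ih => rw [thetaApply_succ]; exact ih _

theorem apply_thetaApply {δ : Fin m → L → L} (hcomm : ∀ i j, Function.Commute (δ i) (δ j))
    (i : Fin m) (e : Fin m → ℕ) (u : L) :
    δ i (thetaApply δ e u) = thetaApply δ (e + Pi.single i 1) u := by
  induction m with
  | zero => exact i.elim0
  | succ m ih =>
    rw [thetaApply_succ, thetaApply_succ]
    cases i using Fin.cases with
    | zero =>
      rw [← Function.iterate_succ_apply' (δ 0)]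
      simp
    | succ j =>
      have head_eq : (e + Pi.single j.succ 1 : Fin (m + 1) → ℕ) 0 = e 0 := by simp
      have tail_eq : (fun k => (e + Pi.single j.succ 1 : Fin (m + 1) → ℕ) k.succ) =
          (fun k => e k.succ) + Pi.single j 1 := by
        ext k
        simp [Pi.single_apply]
      rw [((hcomm j.succ 0).iterate_right (e 0)).eq,
        ih (δ := fun i => δ i.succ) (fun _ _ => hcomm _ _), head_eq, tail_eq]

theorem thetaApply_mem_of_filtration {P : ℕ → Set L} {δ : Fin m → L → L}
    (hP : ∀ k i, ∀ u ∈ P k, δ i u ∈ P (k + 1)) (e : Fin m → ℕ) {k : ℕ} {u : L} (hu : u ∈ P k) :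
    thetaApply δ e u ∈ P (k + ∑ i, e i) := by
  induction m with
  | zero => simpa [thetaApply] using hu
  | succ m ih =>
    have iterate_mem (a b : ℕ) (v : L) (hv : v ∈ P b) : (δ 0)^[a] v ∈ P (b + a) := by
      induction a with
      | zero => exact hv
      | succ a iha => rw [Function.iterate_succ_apply']; exact hP _ _ _ iha
    rw [thetaApply_succ, Fin.sum_univ_succ, add_comm (e 0), ← add_assoc]
    exact iterate_mem _ _ _ (ih (fun k i => hP k i.succ) _)

/-- The set `Θ(s)η` of all derivatives of order at most `s` of the members of the family `η`. It
names the set of generators appearing in `diffTrdeg`, which is written in the same form. -/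
def derivativesUpTo (δ : Fin m → L → L) (η : ι → L) (s : ℕ) : Set L :=
  {x : L | ∃ e : Fin m → ℕ, (∑ i, e i) ≤ s ∧ ∃ j : ι, x = thetaApply δ e (η j)}

theorem derivativesUpTo_mono (δ : Fin m → L → L) (η : ι → L) :
    Monotone (derivativesUpTo δ η) := by
  rintro s t hst _ ⟨e, he, hj⟩
  exact ⟨e, he.trans hst, hj⟩

theorem mem_derivativesUpTo_zero (δ : Fin m → L → L) (η : ι → L) (j : ι) :
    η j ∈ derivativesUpTo δ η 0 :=
  ⟨0, by simp, j, (thetaApply_zero δ _).symm⟩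

theorem apply_mem_derivativesUpTo_succ {δ : Fin m → L → L}
    (hcomm : ∀ i j, Function.Commute (δ i) (δ j)) {η : ι → L} {s : ℕ} (i : Fin m) {u : L}
    (hu : u ∈ derivativesUpTo δ η s) : δ i u ∈ derivativesUpTo δ η (s + 1) := by
  obtain ⟨e, he, j, rfl⟩ := hu
  exact ⟨e + Pi.single i 1, by simpa [Finset.sum_add_distrib] using he, j,
    apply_thetaApply hcomm i e _⟩

theorem finite_derivativesUpTo [Finite ι] (δ : Fin m → L → L) (η : ι → L) (s : ℕ) :
    (derivativesUpTo δ η s).Finite := by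
  refine (((Set.finite_Iic fun _ : Fin m => s).prod (Set.finite_univ (α := ι))).image
    fun a => thetaApply δ a.1 (η a.2)).subset ?_
  rintro _ ⟨e, he, j, rfl⟩
  have e_le (i : Fin m) : e i ≤ s :=
    (Finset.single_le_sum_of_canonicallyOrdered (Finset.mem_univ i)).trans he
  exact ⟨(e, j), ⟨e_le, trivial⟩, rfl⟩

end IteratedDerivatives

section DifferentialField

variable {L ι κ : Type*} [Field L] {m n k : ℕ} {δ : Fin m → L → L}

/-- The maps `δ i` are pairwise commuting derivations of `L`. They are kept as bare functions, the
form in which differential subfields and Kolchin polynomials take them. -/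
structure IsCommutingDerivations (δ : Fin m → L → L) : Prop where
  map_add (i : Fin m) (a b : L) : δ i (a + b) = δ i a + δ i b
  leibniz (i : Fin m) (a b : L) : δ i (a * b) = a * δ i b + δ i a * b
  commute (i j : Fin m) : Function.Commute (δ i) (δ j)

theorem IsCommutingDerivations.map_inv (hδ : IsCommutingDerivations δ) (i : Fin m) (a : L) :
    δ i a⁻¹ = -a⁻¹ ^ 2 * δ i a :=
  let D : Derivation ℤ L L :=
    .mk' (AddMonoidHom.mk' (δ i) (hδ.map_add i)).toIntLinearMap fun a b =>
      (hδ.leibniz i a b).trans (congrArg _ (mul_comm _ _))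
  D.leibniz_inv a

theorem le_diffAdjoin (K : Subfield L) (S : Set L) : K ≤ diffAdjoin δ K S :=
  le_sInf fun _ hF => hF.2.1

theorem subset_diffAdjoin (K : Subfield L) (S : Set L) : S ⊆ diffAdjoin δ K S :=
  fun _ hx => Subfield.mem_sInf.mpr fun _ hF => hF.2.2 hx

theorem isDiffSubfield_diffAdjoin (K : Subfield L) (S : Set L) :
    IsDiffSubfield δ (diffAdjoin δ K S) :=
  fun i x hx => Subfield.mem_sInf.mpr fun F hF => hF.1 i x (Subfield.mem_sInf.mp hx F hF)

theorem diffAdjoin_le {K F : Subfield L} {S : Set L} (hF : IsDiffSubfield δ F) (hKF : K ≤ F)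
    (hSF : S ⊆ F) : diffAdjoin δ K S ≤ F :=
  sInf_le ⟨hF, hKF, hSF⟩

/-- The field `K(Θ(s)η)` whose transcendence degree over `K` is `T_{η/K}(s)`. -/
def adjoinDerivatives (δ : Fin m → L → L) (K : Subfield L) (η : ι → L) (s : ℕ) :
    IntermediateField K L :=
  IntermediateField.adjoin K (derivativesUpTo δ η s)

theorem diffTrdeg_eq_toNat_trdeg (K : Subfield L) (η : Fin n → L) (s : ℕ) :
    diffTrdeg δ K η s = (Algebra.trdeg K (adjoinDerivatives δ K η s)).toNat :=
  rfl

theorem trdeg_adjoinDerivatives_lt_aleph0 [Finite ι] (K : Subfield L) (η : ι → L) (s : ℕ) :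
    Algebra.trdeg K (adjoinDerivatives δ K η s) < Cardinal.aleph0 :=
  trdeg_adjoin_lt_aleph0 (finite_derivativesUpTo δ η s)

theorem adjoinDerivatives_mono (K : Subfield L) (η : ι → L) :
    Monotone (adjoinDerivatives δ K η) :=
  fun _ _ hst => IntermediateField.adjoin.mono _ _ _ (derivativesUpTo_mono δ η hst)

theorem apply_mem_adjoinDerivatives_succ (hδ : IsCommutingDerivations δ) {K : Subfield L}
    (hK : IsDiffSubfield δ K) {η : ι → L} {s : ℕ} (i : Fin m) {u : L}
    (hu : u ∈ adjoinDerivatives δ K η s) : δ i u ∈ adjoinDerivatives δ K η (s + 1) := by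
  have mem_succ {v : L} (hv : v ∈ adjoinDerivatives δ K η s) :
      v ∈ adjoinDerivatives δ K η (s + 1) :=
    adjoinDerivatives_mono K η s.le_succ hv
  induction hu using IntermediateField.adjoin_induction with
  | mem a ha =>
    exact IntermediateField.subset_adjoin _ _ (apply_mem_derivativesUpTo_succ hδ.commute i ha)
  | algebraMap a => exact IntermediateField.algebraMap_mem _ (⟨δ i a, hK i a a.2⟩ : K)
  | add a b _ _ iha ihb => rw [hδ.map_add]; exact add_mem iha ihb
  | inv a ha iha => rw [hδ.map_inv]; exact mul_mem (neg_mem (pow_mem (inv_mem (mem_succ ha)) 2)) iha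
  | mul a b ha hb iha ihb =>
    rw [hδ.leibniz]
    exact add_mem (mul_mem (mem_succ ha) ihb) (mul_mem iha (mem_succ hb))

theorem exists_mem_adjoinDerivatives_of_mem_diffAdjoin (hδ : IsCommutingDerivations δ)
    {K : Subfield L} (hK : IsDiffSubfield δ K) {η : ι → L} {u : L}
    (hu : u ∈ diffAdjoin δ K (Set.range η)) : ∃ s, u ∈ adjoinDerivatives δ K η s := by
  let F (s : ℕ) : Subfield L := (adjoinDerivatives δ K η s).toSubfield
  have hF : Monotone F := adjoinDerivatives_mono K η
  have mem_iSup_F {v : L} : v ∈ iSup F ↔ ∃ s, v ∈ F s :=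
    Subfield.mem_iSup_of_directed hF.directed_le
  refine mem_iSup_F.mp (diffAdjoin_le ?_ ?_ ?_ hu)
  · intro i v hv
    obtain ⟨s, hs⟩ := mem_iSup_F.mp hv
    exact mem_iSup_F.mpr ⟨s + 1, apply_mem_adjoinDerivatives_succ hδ hK i hs⟩
  · exact fun v hv => mem_iSup_F.mpr
      ⟨0, (adjoinDerivatives δ K η 0).algebraMap_mem (⟨v, hv⟩ : K)⟩
  · rintro _ ⟨j, rfl⟩
    exact mem_iSup_F.mpr ⟨0, IntermediateField.subset_adjoin _ _ (mem_derivativesUpTo_zero δ η j)⟩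

theorem exists_forall_mem_adjoinDerivatives [Finite ι] (hδ : IsCommutingDerivations δ)
    {K : Subfield L} (hK : IsDiffSubfield δ K) {η : ι → L} {ζ : κ → L}
    (h : Set.range η ⊆ diffAdjoin δ K (Set.range ζ)) :
    ∃ r, ∀ j, η j ∈ adjoinDerivatives δ K ζ r := by
  choose f hf using fun j =>
    exists_mem_adjoinDerivatives_of_mem_diffAdjoin hδ hK (h (Set.mem_range_self j))
  obtain ⟨r, hr⟩ := Finite.exists_le f
  exact ⟨r, fun j => adjoinDerivatives_mono K ζ (hr j) (hf j)⟩

theorem adjoinDerivatives_le_add (hδ : IsCommutingDerivations δ) {K : Subfield L}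
    (hK : IsDiffSubfield δ K) {η : ι → L} {ζ : κ → L} {r : ℕ}
    (h : ∀ j, η j ∈ adjoinDerivatives δ K ζ r) (s : ℕ) :
    adjoinDerivatives δ K η s ≤ adjoinDerivatives δ K ζ (s + r) := by
  refine IntermediateField.adjoin_le_iff.mpr ?_
  rintro _ ⟨e, he, j, rfl⟩
  have mem_order : thetaApply δ e (η j) ∈ adjoinDerivatives δ K ζ (r + ∑ i, e i) :=
    thetaApply_mem_of_filtration (P := fun t => (adjoinDerivatives δ K ζ t : Set L))
      (fun _ i _ hu => apply_mem_adjoinDerivatives_succ hδ hK i hu) e (h j)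
  exact adjoinDerivatives_mono K ζ (by lia) mem_order

theorem diffTrdeg_le_of_base_le {A B : Subfield L} (hAB : A ≤ B) (η : Fin n → L) (s : ℕ) :
    diffTrdeg δ B η s ≤ diffTrdeg δ A η s := by
  rw [diffTrdeg_eq_toNat_trdeg, diffTrdeg_eq_toNat_trdeg]
  let : Algebra A B := (Subfield.inclusion hAB).toAlgebra
  have : IsScalarTower A B L := .of_algebraMap_eq fun _ => rfl
  exact Cardinal.toNat_le_toNat (trdeg_adjoin_le_of_isScalarTower _)
    (trdeg_adjoinDerivatives_lt_aleph0 A η s)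

theorem exists_diffTrdeg_le_add (hδ : IsCommutingDerivations δ) {K : Subfield L}
    (hK : IsDiffSubfield δ K) {η : Fin n → L} {ζ : Fin k → L}
    (h : Set.range η ⊆ diffAdjoin δ K (Set.range ζ)) :
    ∃ r, ∀ s, diffTrdeg δ K η s ≤ diffTrdeg δ K ζ (s + r) := by
  obtain ⟨r, hr⟩ := exists_forall_mem_adjoinDerivatives hδ hK h
  refine ⟨r, fun s => Cardinal.toNat_le_toNat ?_ (trdeg_adjoinDerivatives_lt_aleph0 K ζ _)⟩
  have hle := adjoinDerivatives_le_add hδ hK hr s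
  exact trdeg_le_of_injective (IntermediateField.inclusion hle)
    (IntermediateField.inclusion_injective hle)

end DifferentialField

section PolynomialGrowth

open Filter

variable {𝕜 : Type*} [NormedField 𝕜] [LinearOrder 𝕜] [IsStrictOrderedRing 𝕜] [OrderTopology 𝕜]
  {P Q : 𝕜[X]}

theorem leadingCoeff_nonneg_of_frequently_eval_nonneg (h : ∃ᶠ x in atTop, 0 ≤ P.eval x) :
    0 ≤ P.leadingCoeff := by
  by_contra! hneg
  refine h (Eventually.mono ?_ fun _ => not_le.mpr)
  by_cases hdeg : 0 < P.degree
  · exact (P.tendsto_atBot_of_leadingCoeff_nonpos hdeg hneg.le).eventually_lt_atBot 0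
  · rw [eq_C_of_degree_le_zero (not_lt.mp hdeg), leadingCoeff_C] at hneg
    rw [eq_C_of_degree_le_zero (not_lt.mp hdeg)]
    simpa only [eval_C] using Eventually.of_forall fun _ => hneg

theorem degree_le_and_leadingCoeff_le_of_frequently_eval_le
    (hP : ∃ᶠ x in atTop, 0 ≤ P.eval x) (hPQ : ∃ᶠ x in atTop, P.eval x ≤ Q.eval x) :
    P.degree ≤ Q.degree ∧ (P.degree = Q.degree → P.leadingCoeff ≤ Q.leadingCoeff) := by
  have leadingCoeff_P : 0 ≤ P.leadingCoeff := leadingCoeff_nonneg_of_frequently_eval_nonneg hP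
  have leadingCoeff_sub : 0 ≤ (Q - P).leadingCoeff :=
    leadingCoeff_nonneg_of_frequently_eval_nonneg <| by simpa only [eval_sub, sub_nonneg] using hPQ
  refine ⟨?_, fun hdeg => ?_⟩
  · by_contra! hlt
    rw [leadingCoeff_sub_of_degree_lt' hlt, neg_nonneg] at leadingCoeff_sub
    have P_eq_zero : P = 0 := leadingCoeff_eq_zero.mp (leadingCoeff_sub.antisymm leadingCoeff_P)
    simp [P_eq_zero] at hlt
  · by_contra! hlt
    rw [leadingCoeff_sub_of_degree_eq hdeg.symm hlt.ne, sub_nonneg] at leadingCoeff_sub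
    exact hlt.not_ge leadingCoeff_sub

end PolynomialGrowth

section KolchinPolynomial

open Filter

variable {L : Type*} [Field L] {m n k : ℕ} {δ : Fin m → L → L} {A B : Subfield L}
  {η : Fin n → L} {ζ : Fin k → L} {p q : ℚ[X]}

theorem isKolchinPoly_iff_eventually :
    IsKolchinPoly δ A η p ↔ ∀ᶠ s : ℕ in atTop, p.eval (s : ℚ) = diffTrdeg δ A η s :=
  eventually_atTop.symm

theorem IsKolchinPoly.unique (hp : IsKolchinPoly δ A η p) (hq : IsKolchinPoly δ A η q) :
    p = q := by
  rw [isKolchinPoly_iff_eventually] at hp hq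
  have frequently_eq : ∃ᶠ s : ℕ in atTop, p.eval (s : ℚ) = q.eval (s : ℚ) :=
    (hp.and hq).frequently.mono fun s hs => hs.1.trans hs.2.symm
  have infinite_eq : {s : ℕ | p.eval (s : ℚ) = q.eval (s : ℚ)}.Infinite :=
    Nat.frequently_atTop_iff_infinite.mp frequently_eq
  refine eq_of_infinite_eval_eq p q ((infinite_eq.image Nat.cast_injective.injOn).mono ?_)
  rintro _ ⟨s, hs, rfl⟩
  exact hs

theorem IsKolchinPoly.degree_le_and_leadingCoeff_le (hp : IsKolchinPoly δ A η p)
    (hq : IsKolchinPoly δ B ζ q) {r : ℕ}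
    (h : ∀ s, diffTrdeg δ A η s ≤ diffTrdeg δ B ζ (s + r)) :
    p.degree ≤ q.degree ∧ (p.degree = q.degree → p.leadingCoeff ≤ q.leadingCoeff) := by
  rw [isKolchinPoly_iff_eventually] at hp hq
  have p_nonneg : ∀ᶠ s : ℕ in atTop, 0 ≤ p.eval (s : ℚ) :=
    hp.mono fun s hs => hs ▸ Nat.cast_nonneg _
  have p_le : ∀ᶠ s : ℕ in atTop, p.eval (s : ℚ) ≤ (taylor (r : ℚ) q).eval (s : ℚ) := by
    filter_upwards [hp, (tendsto_add_atTop_nat r).eventually hq] with s hps hqs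
    rw [taylor_eval, ← Nat.cast_add, hps, hqs]
    exact_mod_cast h s
  have cast_tendsto : Tendsto ((↑) : ℕ → ℚ) atTop atTop := tendsto_natCast_atTop_atTop
  rw [← degree_taylor q (r : ℚ), ← leadingCoeff_taylor (r : ℚ) (f := q)]
  exact degree_le_and_leadingCoeff_le_of_frequently_eval_le
    (cast_tendsto.frequently p_nonneg.frequently) (cast_tendsto.frequently p_le.frequently)

end KolchinPolynomial

theorem type_le_of_interdefinable_of_indep_general {L : Type*} [Field L] {m n k : ℕ}
    {δ : Fin m → L → L} (hδ : IsCommutingDerivations δ) {A B : Subfield L} (hAB : A ≤ B)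
    (hB : IsDiffSubfield δ B) {y : Fin n → L} {z : Fin k → L}
    (hyz : Set.range y ⊆ diffAdjoin δ B (Set.range z))
    (hindep : ∃ f : ℚ[X], IsKolchinPoly δ B y f ∧ IsKolchinPoly δ A y f) {p q : ℚ[X]}
    (hp : IsKolchinPoly δ A y p) (hq : IsKolchinPoly δ A z q) :
    p.degree ≤ q.degree ∧ (p.degree = q.degree → p.leadingCoeff ≤ q.leadingCoeff) := by
  obtain ⟨f, hfB, hfA⟩ := hindep
  obtain rfl : p = f := hp.unique hfA
  obtain ⟨r, hr⟩ := exists_diffTrdeg_le_add hδ hB hyz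
  exact hfB.degree_le_and_leadingCoeff_le hq fun s =>
    (hr s).trans (diffTrdeg_le_of_base_le hAB z (s + r))

/-- Lemma 2.5 of the paper (translation lemma): if `A⟨x⟩⟨y⟩ = A⟨x⟩⟨z⟩` and `y` is independent
from `x` over `A` (some Kolchin polynomial of `y` over `A⟨x⟩` is also one over `A`), then
`τ(y/A) ≤ τ(z/A)`, and in case of equality `α(y/A) ≤ α(z/A)`. -/
theorem type_le_of_interdefinable_of_indep
    {L : Type*} [Field L] [CharZero L] {m : ℕ} (hm : 1 ≤ m)
    (δ : Fin m → L → L)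
    (hadd : ∀ i : Fin m, ∀ x' y' : L, δ i (x' + y') = δ i x' + δ i y')
    (hleib : ∀ i : Fin m, ∀ x' y' : L, δ i (x' * y') = x' * δ i y' + δ i x' * y')
    (hcomm : ∀ i j : Fin m, ∀ x' : L, δ i (δ j x') = δ j (δ i x'))
    (A : Subfield L) (hA : IsDiffSubfield δ A)
    {n₁ n₂ n₃ : ℕ} (x : Fin n₁ → L) (y : Fin n₂ → L) (z : Fin n₃ → L)
    (hgen : diffAdjoin δ (diffAdjoin δ A (Set.range x)) (Set.range y) =
            diffAdjoin δ (diffAdjoin δ A (Set.range x)) (Set.range z))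
    (hindep : ∃ f : ℚ[X],
      IsKolchinPoly δ (diffAdjoin δ A (Set.range x)) y f ∧ IsKolchinPoly δ A y f)
    (p q : ℚ[X])
    (hp : IsKolchinPoly δ A y p)
    (hq : IsKolchinPoly δ A z q) :
    p.degree ≤ q.degree ∧ (p.degree = q.degree → p.leadingCoeff ≤ q.leadingCoeff) :=
  type_le_of_interdefinable_of_indep_general ⟨hadd, hleib, hcomm⟩ (le_diffAdjoin A _)
    (isDiffSubfield_diffAdjoin A _) (hgen ▸ subset_diffAdjoin _ _) hindep hp hq
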